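/- arXiv:1305.0353 — 2 statements merged into one kernel-verified Lean document; each statement's English description precedes it below -/
import Mathlib

section
/- If n = 2 then λ_k = λ^G_{π,ν} for all k ≥ 1. If n ≥ 3 then: (1) if λ_0 = λ^G_{π,ν} then λ_k = λ^G_{π,ν} for all k ≥ 0; (2) if λ_0 ≠ λ^G_{π,ν} then λ_k > λ_{k+1} > λ^G_{π,ν} for all k ≥ 1; (3) the limit (λ*, ψ*) = lim_{k→∞} (λ_k, ψ_k) exists and satisfies λ* = E_ν(ψ*,ψ*)/Var_π(ψ*) = λ^G_{π,ν} and π(ψ*) = 0. -/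
open Finset

/-- Dirichlet form on the path with vertices `{1,…,n}`;
`ν i` denotes the weight of edge `{i, i+1}`. -/
noncomputable def EForm (n : ℕ) (ν : ℕ → ℝ) (f g : ℕ → ℝ) : ℝ :=
  ∑ i ∈ Finset.Icc 1 (n - 1), (f i - f (i + 1)) * (g i - g (i + 1)) * ν i

/-- Mean of `f` with respect to `π` on `{1,…,n}`. -/
noncomputable def piMean (n : ℕ) (π : ℕ → ℝ) (f : ℕ → ℝ) : ℝ :=
  ∑ i ∈ Finset.Icc 1 n, f i * π i

/-- Variance of `f` with respect to `π` on `{1,…,n}`. -/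
noncomputable def varPi (n : ℕ) (π : ℕ → ℝ) (f : ℕ → ℝ) : ℝ :=
  piMean n π (fun i => (f i) ^ 2) - (piMean n π f) ^ 2

/-- `f` is non-constant on `{1,…,n}`. -/
def Nonconstant (n : ℕ) (f : ℕ → ℝ) : Prop :=
  ∃ i ∈ Finset.Icc 1 n, ∃ j ∈ Finset.Icc 1 n, f i ≠ f j

/-- `lam` is the spectral gap: the minimum of the Rayleigh quotients over
non-constant functions. -/
def IsSpectralGap (n : ℕ) (π ν : ℕ → ℝ) (lam : ℝ) : Prop :=
  IsLeast {r : ℝ | ∃ f : ℕ → ℝ, Nonconstant n f ∧ r = EForm n ν f f / varPi n π f} lam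

/-- The positive-part recursion with parameter `lam`:
`ψ(i+1) = ψ(i) + max{[ψ(i)−ψ(i−1)]ν(i−1,i) − λ π(i) ψ(i), 0}/ν(i,i+1)` for `1 ≤ i < n`. -/
def PosPartRec (n : ℕ) (π ν : ℕ → ℝ) (lam : ℝ) (ψ : ℕ → ℝ) : Prop :=
  ∀ i, 1 ≤ i → i < n →
    ψ (i + 1) = ψ i + max ((ψ i - ψ (i - 1)) * ν (i - 1) - lam * (π i * ψ i)) 0 / ν i

/-- The flow `(f(i+1) - f(i)) ν(i)`. -/
noncomputable def flow (ν f : ℕ → ℝ) (i : ℕ) : ℝ := (f (i + 1) - f i) * ν i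

theorem sbp (g D : ℕ → ℝ) (m : ℕ) :
    ∑ i ∈ Finset.Icc 1 (m + 1), g i * (D (i - 1) - D i) =
      ∑ i ∈ Finset.Icc 1 m, (g (i + 1) - g i) * D i - g (m + 1) * D (m + 1) + g 1 * D 0 := by
  induction m with
  | zero => simp; ring
  | succ k ih =>
    rw [Finset.sum_Icc_succ_top (by omega), ih, Finset.sum_Icc_succ_top (by omega)]
    simp only [Nat.add_sub_cancel]
    ring

theorem EForm_eq (n : ℕ) (hn : 1 ≤ n) (ν f g : ℕ → ℝ) (hν0 : ν 0 = 0) (hνn : ν n = 0) :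
    EForm n ν f g = ∑ i ∈ Finset.Icc 1 n, g i * (flow ν f (i - 1) - flow ν f i) := by
  obtain ⟨m, rfl⟩ : ∃ m, n = m + 1 := ⟨n - 1, by omega⟩
  rw [sbp]
  simp only [EForm, flow, hν0, hνn, Nat.add_sub_cancel, mul_zero, sub_zero, add_zero]
  exact Finset.sum_congr rfl fun i _ => by ring

theorem EForm_comm (n : ℕ) (ν f g : ℕ → ℝ) : EForm n ν f g = EForm n ν g f :=
  Finset.sum_congr rfl fun i _ => by ring

theorem two_var (n : ℕ) (π f : ℕ → ℝ) (hπ1 : ∑ i ∈ Finset.Icc 1 n, π i = 1) :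
    2 * varPi n π f =
      ∑ i ∈ Finset.Icc 1 n, ∑ j ∈ Finset.Icc 1 n, π i * π j * (f i - f j) ^ 2 := by
  have h1 : ∀ i j, π i * π j * (f i - f j) ^ 2 =
      (f i ^ 2 * π i) * π j + π i * (f j ^ 2 * π j) - 2 * ((f i * π i) * (f j * π j)) := by
    intro i j; ring
  simp only [h1, Finset.sum_add_distrib, Finset.sum_sub_distrib, ← Finset.mul_sum,
    ← Finset.sum_mul, hπ1, varPi, piMean]
  ring

theorem var_pos (n : ℕ) (π f : ℕ → ℝ) (hπ : ∀ i ∈ Finset.Icc 1 n, 0 < π i)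
    (hπ1 : ∑ i ∈ Finset.Icc 1 n, π i = 1) (hf : Nonconstant n f) : 0 < varPi n π f := by
  have h := two_var n π f hπ1
  obtain ⟨i, hi, j, hj, hij⟩ := hf
  have : 0 < ∑ i ∈ Finset.Icc 1 n, ∑ j ∈ Finset.Icc 1 n, π i * π j * (f i - f j) ^ 2 := by
    have hnn : ∀ i ∈ Finset.Icc 1 n, ∀ j ∈ Finset.Icc 1 n, 0 ≤ π i * π j * (f i - f j) ^ 2 :=
      fun i hi j hj => mul_nonneg (mul_pos (hπ i hi) (hπ j hj)).le (sq_nonneg _)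
    refine Finset.sum_pos' (fun i hi => Finset.sum_nonneg (hnn i hi)) ⟨i, hi, ?_⟩
    refine Finset.sum_pos' (hnn i hi) ⟨j, hj, ?_⟩
    have := sub_ne_zero.2 hij
    have := hπ i hi
    have := hπ j hj
    positivity
  linarith

theorem var_const (n : ℕ) (π f : ℕ → ℝ)
    (hπ1 : ∑ i ∈ Finset.Icc 1 n, π i = 1) (hf : ¬ Nonconstant n f) : varPi n π f = 0 := by
  have h := two_var n π f hπ1
  have : ∑ i ∈ Finset.Icc 1 n, ∑ j ∈ Finset.Icc 1 n, π i * π j * (f i - f j) ^ 2 = 0 := by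
    refine Finset.sum_eq_zero fun i hi => Finset.sum_eq_zero fun j hj => ?_
    have : f i = f j := by
      by_contra hne
      exact hf ⟨i, hi, j, hj, hne⟩
    simp [this]
  linarith

theorem E_nonneg (n : ℕ) (ν f : ℕ → ℝ) (hν : ∀ i ∈ Finset.Icc 1 (n - 1), 0 < ν i) :
    0 ≤ EForm n ν f f :=
  Finset.sum_nonneg fun i hi => mul_nonneg (mul_self_nonneg _) (hν i hi).le

theorem nonconst_step (n : ℕ) (f : ℕ → ℝ) (h : ∀ i ∈ Finset.Icc 1 (n - 1), f i = f (i + 1)) :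
    ¬ Nonconstant n f := by
  have key : ∀ i, 1 ≤ i → i ≤ n → f i = f 1 := by
    intro i hi
    induction i, hi using Nat.le_induction with
    | base => intro _; rfl
    | succ k hk ih =>
      intro hkn
      rw [← h k (by simp; omega), ih (by omega)]
  rintro ⟨i, hi, j, hj, hij⟩
  simp at hi hj
  exact hij ((key i hi.1 hi.2).trans (key j hj.1 hj.2).symm)

theorem E_pos (n : ℕ) (ν f : ℕ → ℝ) (hν : ∀ i ∈ Finset.Icc 1 (n - 1), 0 < ν i)
    (hf : Nonconstant n f) : 0 < EForm n ν f f := by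
  have : ∃ i ∈ Finset.Icc 1 (n - 1), f i ≠ f (i + 1) := by
    by_contra hc
    push Not at hc
    exact nonconst_step n f hc hf
  obtain ⟨i, hi, hne⟩ := this
  refine Finset.sum_pos' (fun i hi => mul_nonneg (mul_self_nonneg _) (hν i hi).le) ⟨i, hi, ?_⟩
  exact mul_pos (mul_self_pos.2 (sub_ne_zero.2 hne)) (hν i hi)

theorem gap_pos (n : ℕ) (π ν : ℕ → ℝ) (hπ : ∀ i ∈ Finset.Icc 1 n, 0 < π i)
    (hπ1 : ∑ i ∈ Finset.Icc 1 n, π i = 1) (hν : ∀ i ∈ Finset.Icc 1 (n - 1), 0 < ν i)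
    (gap : ℝ) (hgap : IsSpectralGap n π ν gap) : 0 < gap := by
  obtain ⟨f, hf, rfl⟩ := hgap.1
  exact div_pos (E_pos n ν f hν hf) (var_pos n π f hπ hπ1 hf)

theorem gap_le (n : ℕ) (π ν : ℕ → ℝ) (hπ : ∀ i ∈ Finset.Icc 1 n, 0 < π i)
    (hπ1 : ∑ i ∈ Finset.Icc 1 n, π i = 1) (hν : ∀ i ∈ Finset.Icc 1 (n - 1), 0 < ν i)
    (gap : ℝ) (hgap : IsSpectralGap n π ν gap) (f : ℕ → ℝ) :
    gap * varPi n π f ≤ EForm n ν f f := by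
  by_cases hf : Nonconstant n f
  · have := hgap.2 ⟨f, hf, rfl⟩
    exact (le_div_iff₀ (var_pos n π f hπ hπ1 hf)).1 this
  · rw [var_const n π f hπ1 hf, mul_zero]
    exact E_nonneg n ν f hν

/-- Euler-Lagrange equation for a minimizer. -/
theorem euler_lagrange (n : ℕ) (π ν : ℕ → ℝ) (hπ : ∀ i ∈ Finset.Icc 1 n, 0 < π i)
    (hπ1 : ∑ i ∈ Finset.Icc 1 n, π i = 1) (hν : ∀ i ∈ Finset.Icc 1 (n - 1), 0 < ν i)
    (gap : ℝ) (hgap : IsSpectralGap n π ν gap) (f : ℕ → ℝ)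
    (hf : EForm n ν f f = gap * varPi n π f) (g : ℕ → ℝ) :
    EForm n ν f g = gap * (piMean n π (fun i => f i * g i) - piMean n π f * piMean n π g) := by
  set A := EForm n ν f g - gap * (piMean n π (fun i => f i * g i) - piMean n π f * piMean n π g)
    with hA
  set B := EForm n ν g g - gap * varPi n π g with hB
  have hB0 : 0 ≤ B := by
    have := gap_le n π ν hπ hπ1 hν gap hgap g
    linarith
  have hE : ∀ t : ℝ, EForm n ν (fun i => f i + t * g i) (fun i => f i + t * g i) =
      EForm n ν f f + 2 * t * EForm n ν f g + t ^ 2 * EForm n ν g g := by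
    intro t
    simp only [EForm, Finset.mul_sum, ← Finset.sum_add_distrib]
    exact Finset.sum_congr rfl fun i _ => by ring
  have hM : ∀ t : ℝ, piMean n π (fun i => f i + t * g i) = piMean n π f + t * piMean n π g := by
    intro t
    simp only [piMean, Finset.mul_sum, ← Finset.sum_add_distrib]
    exact Finset.sum_congr rfl fun i _ => by ring
  have hM2 : ∀ t : ℝ, piMean n π (fun i => (f i + t * g i) ^ 2) =
      piMean n π (fun i => f i ^ 2) + 2 * t * piMean n π (fun i => f i * g i)
        + t ^ 2 * piMean n π (fun i => g i ^ 2) := by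
    intro t
    simp only [piMean, Finset.mul_sum, ← Finset.sum_add_distrib]
    exact Finset.sum_congr rfl fun i _ => by ring
  have hq : ∀ t : ℝ, 0 ≤ 2 * t * A + t ^ 2 * B := by
    intro t
    have h := gap_le n π ν hπ hπ1 hν gap hgap (fun i => f i + t * g i)
    rw [hE t, varPi, hM, hM2] at h
    rw [hA, hB]
    simp only [varPi] at hf ⊢
    nlinarith
  have hA0 : A = 0 := by
    have h := hq (-A / (B + 1))
    have hb : 0 < B + 1 := by linarith
    have e : 2 * (-A / (B + 1)) * A + (-A / (B + 1)) ^ 2 * B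
        = - (A ^ 2 * (B + 2)) / (B + 1) ^ 2 := by
      field_simp; ring
    rw [e] at h
    have h2 : 0 ≤ - (A ^ 2 * (B + 2)) := by
      by_contra hc
      push Not at hc
      have := div_neg_of_neg_of_pos hc (pow_pos hb 2)
      linarith
    have h3 : A ^ 2 ≤ 0 := by nlinarith [sq_nonneg A]
    exact pow_eq_zero_iff (two_ne_zero) |>.1 (le_antisymm h3 (sq_nonneg A))
  linarith

/-- Existence of a monotone, mean-zero minimizer. -/
theorem exists_mono (n : ℕ) (hn : 2 ≤ n) (π ν : ℕ → ℝ) (hπ : ∀ i ∈ Finset.Icc 1 n, 0 < π i)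
    (hπ1 : ∑ i ∈ Finset.Icc 1 n, π i = 1) (hν : ∀ i ∈ Finset.Icc 1 (n - 1), 0 < ν i)
    (gap : ℝ) (hgap : IsSpectralGap n π ν gap) :
    ∃ h : ℕ → ℝ, Monotone h ∧ piMean n π h = 0 ∧ 0 < h n ∧ h 1 < h 2 ∧
      ∀ g, EForm n ν h g = gap * piMean n π (fun i => h i * g i) := by
  have hg0 := gap_pos n π ν hπ hπ1 hν gap hgap
  obtain ⟨f, hf, hgf⟩ := hgap.1
  have hvf := var_pos n π f hπ hπ1 hf
  have hfE : EForm n ν f f = gap * varPi n π f := by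
    rw [hgf]; field_simp
  set F : ℕ → ℝ := fun i => ∑ j ∈ Finset.range i, |f (j + 1) - f j| with hF
  have hstep : ∀ i, F (i + 1) - F i = |f (i + 1) - f i| := by
    intro i; simp [hF, Finset.sum_range_succ]
  have hmono : Monotone F := monotone_nat_of_le_succ fun i => by
    have := hstep i
    have := abs_nonneg (f (i + 1) - f i)
    linarith
  have hlip : ∀ i j, i ≤ j → |f j - f i| ≤ F j - F i := by
    intro i j hij
    induction j, hij using Nat.le_induction with
    | base => simp
    | succ k hk ih =>
      have h1 := hstep k
      have h2 := abs_sub_le (f (k + 1)) (f k) (f i)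
      linarith
  have hsq : ∀ i j, (f i - f j) ^ 2 ≤ (F i - F j) ^ 2 := by
    intro i j
    rcases le_total i j with h | h
    · have := hlip i j h
      rw [sq_le_sq, abs_sub_comm, abs_sub_comm (F i)]
      exact this.trans (le_abs_self _)
    · have := hlip j i h
      rw [sq_le_sq]
      exact this.trans (le_abs_self _)
  have hEF : EForm n ν F F = EForm n ν f f := by
    refine Finset.sum_congr rfl fun i _ => ?_
    have h1 := hstep i
    have h2 := abs_mul_abs_self (f (i + 1) - f i)
    rw [← h1] at h2
    linear_combination ν i * h2
  have hVF : varPi n π f ≤ varPi n π F := by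
    have h1 := two_var n π f hπ1
    have h2 := two_var n π F hπ1
    have h3 : ∑ i ∈ Finset.Icc 1 n, ∑ j ∈ Finset.Icc 1 n, π i * π j * (f i - f j) ^ 2 ≤
        ∑ i ∈ Finset.Icc 1 n, ∑ j ∈ Finset.Icc 1 n, π i * π j * (F i - F j) ^ 2 :=
      Finset.sum_le_sum fun i hi => Finset.sum_le_sum fun j hj =>
        mul_le_mul_of_nonneg_left (hsq i j) (mul_pos (hπ i hi) (hπ j hj)).le
    linarith
  have hFE : EForm n ν F F = gap * varPi n π F := by
    have h1 := gap_le n π ν hπ hπ1 hν gap hgap F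
    have h2 := mul_le_mul_of_nonneg_left hVF hg0.le
    linarith
  have hVFpos : 0 < varPi n π F := by linarith
  set m := piMean n π F with hm
  have hmean : piMean n π (fun i => F i - m) = 0 := by
    have : piMean n π (fun i => F i - m) = piMean n π F - m * ∑ i ∈ Finset.Icc 1 n, π i := by
      simp only [piMean, Finset.mul_sum, ← Finset.sum_sub_distrib]
      exact Finset.sum_congr rfl fun i _ => by ring
    rw [this, hπ1, ← hm]; ring
  have hEL : ∀ g, EForm n ν (fun i => F i - m) g =
      gap * piMean n π (fun i => (F i - m) * g i) := by
    intro g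
    have h1 := euler_lagrange n π ν hπ hπ1 hν gap hgap F hFE g
    have h2 : EForm n ν (fun i => F i - m) g = EForm n ν F g :=
      Finset.sum_congr rfl fun i _ => by ring
    have h3 : piMean n π (fun i => (F i - m) * g i) =
        piMean n π (fun i => F i * g i) - m * piMean n π g := by
      simp only [piMean, Finset.mul_sum, ← Finset.sum_sub_distrib]
      exact Finset.sum_congr rfl fun i _ => by ring
    rw [h2, h1, h3]
  have hFnc : F 1 < F n := by
    by_contra hc
    have : ¬ Nonconstant n F := by
      rintro ⟨i, hi, j, hj, hij⟩
      simp at hi hj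
      have := hmono hi.1
      have := hmono hi.2
      have := hmono hj.1
      have := hmono hj.2
      apply hij; linarith
    have := var_const n π F hπ1 this
    linarith
  have hn_mem : n ∈ Finset.Icc 1 n := by simp; omega
  have h1_mem : 1 ∈ Finset.Icc 1 n := by simp; omega
  have hpos : 0 < F n - m := by
    have : 0 < ∑ i ∈ Finset.Icc 1 n, (F n - F i) * π i := by
      refine Finset.sum_pos' (fun i hi => mul_nonneg ?_ (hπ i hi).le) ⟨1, h1_mem, ?_⟩
      · simp at hi; linarith [hmono hi.2]
      · exact mul_pos (by linarith) (hπ 1 h1_mem)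
    have e : ∑ i ∈ Finset.Icc 1 n, (F n - F i) * π i =
        F n * ∑ i ∈ Finset.Icc 1 n, π i - piMean n π F := by
      simp only [piMean, Finset.mul_sum, ← Finset.sum_sub_distrib]
      exact Finset.sum_congr rfl fun i _ => by ring
    rw [e, hπ1, ← hm] at this
    linarith
  have hneg : F 1 - m < 0 := by
    have : 0 < ∑ i ∈ Finset.Icc 1 n, (F i - F 1) * π i := by
      refine Finset.sum_pos' (fun i hi => mul_nonneg ?_ (hπ i hi).le) ⟨n, hn_mem, ?_⟩
      · simp at hi; linarith [hmono hi.1]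
      · exact mul_pos (by linarith) (hπ n hn_mem)
    have e : ∑ i ∈ Finset.Icc 1 n, (F i - F 1) * π i =
        piMean n π F - F 1 * ∑ i ∈ Finset.Icc 1 n, π i := by
      simp only [piMean, Finset.mul_sum, ← Finset.sum_sub_distrib]
      exact Finset.sum_congr rfl fun i _ => by ring
    rw [e, hπ1, ← hm] at this
    linarith
  refine ⟨fun i => F i - m, fun i j hij => by simpa using hmono hij, hmean, hpos, ?_, hEL⟩
  have h := hEL (fun i => if i = 1 then 1 else 0)
  have e1 : EForm n ν (fun i => F i - m) (fun i => if i = 1 then 1 else 0) = (F 1 - F 2) * ν 1 := by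
    unfold EForm
    rw [Finset.sum_eq_single 1]
    · simp
    · intro i hi hi1
      simp at hi
      simp [hi1]; intro; omega
    · intro h; simp at h; omega
  have e2 : piMean n π (fun i => (F i - m) * if i = 1 then 1 else 0) = (F 1 - m) * π 1 := by
    unfold piMean
    rw [Finset.sum_eq_single 1]
    · simp
    · intro i hi hi1; simp [hi1]
    · intro h; exact absurd h1_mem h
  rw [e1, e2] at h
  have hν1 := hν 1 (by simp; omega)
  have : gap * ((F 1 - m) * π 1) < 0 :=
    mul_neg_of_pos_of_neg hg0 (mul_neg_of_neg_of_pos hneg (hπ 1 h1_mem))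
  rw [← h] at this
  have : F 1 - F 2 < 0 := by
    by_contra hc
    push Not at hc
    have := mul_nonneg hc hν1.le
    linarith
  simp only
  linarith

/-- The basic facts about one step of the algorithm. -/
theorem step_facts (n : ℕ) (hn : 2 ≤ n) (π ν : ℕ → ℝ) (hπ : ∀ i ∈ Finset.Icc 1 n, 0 < π i)
    (hπ1 : ∑ i ∈ Finset.Icc 1 n, π i = 1) (hν : ∀ i ∈ Finset.Icc 1 (n - 1), 0 < ν i)
    (hν0 : ν 0 = 0) (a : ℝ) (ha : 0 < a) (lam : ℝ) (hlam : 0 < lam)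
    (ψ : ℕ → ℝ) (hψ1 : ψ 1 = -a) (hrec : PosPartRec n π ν lam ψ) :
    (∀ i, 1 ≤ i → i < n → flow ν ψ i = max (flow ν ψ (i - 1) - lam * (π i * ψ i)) 0) ∧
    (∀ i j, 1 ≤ i → i ≤ j → j ≤ n → ψ i ≤ ψ j) ∧
    (flow ν ψ 1 = lam * (π 1 * a) ∧ ψ 1 < ψ 2) ∧
    (∀ i j, 1 ≤ i → i < n → 0 < ψ i → flow ν ψ i = 0 → i ≤ j → j < n →
      flow ν ψ j = 0 ∧ ψ (j + 1) = ψ i) ∧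
    0 < varPi n π ψ ∧ Nonconstant n ψ ∧ piMean n π ψ < ψ n := by
  have hνp : ∀ i, 1 ≤ i → i < n → 0 < ν i := fun i h1 h2 => hν i (by simp; omega)
  have hflow : ∀ i, 1 ≤ i → i < n →
      flow ν ψ i = max (flow ν ψ (i - 1) - lam * (π i * ψ i)) 0 := by
    intro i h1 h2
    have h := hrec i h1 h2
    have hp := hνp i h1 h2
    have e : i - 1 + 1 = i := by omega
    simp only [flow, e]
    rw [h]
    field_simp
    ring
  have hsucc : ∀ i, 1 ≤ i → i < n → ψ i ≤ ψ (i + 1) := by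
    intro i h1 h2
    have h := hrec i h1 h2
    have : 0 ≤ max ((ψ i - ψ (i - 1)) * ν (i - 1) - lam * (π i * ψ i)) 0 / ν i :=
      div_nonneg (le_max_right _ _) (hνp i h1 h2).le
    linarith
  have hmono : ∀ i j, 1 ≤ i → i ≤ j → j ≤ n → ψ i ≤ ψ j := by
    intro i j h1 hij
    induction j, hij using Nat.le_induction with
    | base => intro _; exact le_rfl
    | succ k hk ih => intro hkn; exact (ih (by omega)).trans (hsucc k (by omega) (by omega))
  have h1_mem : 1 ∈ Finset.Icc 1 n := by simp; omega
  have hn_mem : n ∈ Finset.Icc 1 n := by simp; omega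
  have hπ1p := hπ 1 h1_mem
  have hpos : 0 < lam * (π 1 * a) := by positivity
  have hf1 : flow ν ψ 1 = lam * (π 1 * a) := by
    rw [hflow 1 le_rfl (by omega)]
    have : flow ν ψ (1 - 1) = 0 := by simp [flow, hν0]
    rw [this, hψ1, max_eq_left] <;> linarith
  have h12 : ψ 1 < ψ 2 := by
    have h := hf1
    rw [← h] at hpos
    simp only [flow] at hpos
    have := (pos_iff_pos_of_mul_pos hpos).2 (hνp 1 le_rfl (by omega))
    linarith
  have hnc : Nonconstant n ψ := ⟨1, h1_mem, 2, by simp; omega, h12.ne⟩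
  refine ⟨hflow, hmono, ⟨hf1, h12⟩, ?_, var_pos n π ψ hπ hπ1 hnc, hnc, ?_⟩
  · intro i j hi hin hpi hfi hij
    have key : ∀ j, 1 ≤ j → j < n → flow ν ψ j = 0 → ψ (j + 1) = ψ j := by
      intro j h1 h2 h
      have := hνp j h1 h2
      simp only [flow, mul_eq_zero] at h
      rcases h with h | h <;> linarith
    induction j, hij using Nat.le_induction with
    | base => intro _; exact ⟨hfi, key i hi hin hfi⟩
    | succ k hk ih =>
      intro hkn
      obtain ⟨h1, h2⟩ := ih (by omega)
      have h3 : flow ν ψ (k + 1) = 0 := by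
        rw [hflow (k + 1) (by omega) hkn, Nat.add_sub_cancel, h1, h2]
        apply max_eq_right
        have := hπ (k + 1) (by simp; omega)
        have : 0 < lam * (π (k + 1) * ψ i) := by positivity
        linarith
      exact ⟨h3, (key (k + 1) (by omega) hkn h3).trans h2⟩
  · have : 0 < ∑ i ∈ Finset.Icc 1 n, (ψ n - ψ i) * π i := by
      refine Finset.sum_pos' (fun i hi => mul_nonneg ?_ (hπ i hi).le) ⟨1, h1_mem, ?_⟩
      · simp at hi; linarith [hmono i n hi.1 hi.2 le_rfl]
      · exact mul_pos (by linarith [hmono 2 n (by omega) hn le_rfl]) (hπ 1 h1_mem)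
    have e : ∑ i ∈ Finset.Icc 1 n, (ψ n - ψ i) * π i =
        ψ n * ∑ i ∈ Finset.Icc 1 n, π i - piMean n π ψ := by
      simp only [piMean, Finset.mul_sum, ← Finset.sum_sub_distrib]
      exact Finset.sum_congr rfl fun i _ => by ring
    rw [e, hπ1] at this
    linarith

/-- `E(ψ,ψ) = λ (Var ψ + π(ψ)(π(ψ) - ψ(n)))`, and the sign of `π(ψ)`. -/
theorem step_main (n : ℕ) (hn : 2 ≤ n) (π ν : ℕ → ℝ) (hπ : ∀ i ∈ Finset.Icc 1 n, 0 < π i)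
    (hπ1 : ∑ i ∈ Finset.Icc 1 n, π i = 1) (hν : ∀ i ∈ Finset.Icc 1 (n - 1), 0 < ν i)
    (hν0 : ν 0 = 0) (hνn : ν n = 0) (gap : ℝ) (hgap : IsSpectralGap n π ν gap)
    (a : ℝ) (ha : 0 < a) (lam : ℝ) (hlam : 0 < lam)
    (ψ : ℕ → ℝ) (hψ1 : ψ 1 = -a) (hrec : PosPartRec n π ν lam ψ) :
    EForm n ν ψ ψ = lam * (varPi n π ψ + piMean n π ψ * (piMean n π ψ - ψ n)) ∧
    (gap < lam → 0 < piMean n π ψ) ∧ (lam = gap → 0 ≤ piMean n π ψ) := by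
  obtain ⟨hflow, hmono, ⟨hf1, h12⟩, hfreeze, hvar, hnc, hmn⟩ :=
    step_facts n hn π ν hπ hπ1 hν hν0 a ha lam hlam ψ hψ1 hrec
  have hg0 := gap_pos n π ν hπ hπ1 hν gap hgap
  set r : ℕ → ℝ := fun i => lam * (π i * ψ i) - (flow ν ψ (i - 1) - flow ν ψ i) with hr
  have hEr : ∀ g, EForm n ν ψ g =
      lam * piMean n π (fun i => ψ i * g i) - ∑ i ∈ Finset.Icc 1 n, g i * r i := by
    intro g
    rw [EForm_eq n (by omega) ν ψ g hν0 hνn]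
    simp only [piMean, Finset.mul_sum, ← Finset.sum_sub_distrib, hr]
    exact Finset.sum_congr rfl fun i _ => by ring
  have hsum : ∑ i ∈ Finset.Icc 1 n, r i = lam * piMean n π ψ := by
    have h := hEr (fun _ => 1)
    have h0 : EForm n ν ψ (fun _ => 1) = 0 := by simp [EForm]
    rw [h0] at h
    simp only [one_mul, mul_one] at h
    have : piMean n π (fun i => ψ i) = piMean n π ψ := rfl
    linarith
  have hr0 : ∀ i, 1 ≤ i → i < n → 0 ≤ r i := by
    intro i h1 h2
    have := hflow i h1 h2
    have := le_max_left (flow ν ψ (i - 1) - lam * (π i * ψ i)) 0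
    simp only [hr]; linarith
  have hrz : ∀ i ∈ Finset.Icc 1 n, ψ i * r i = ψ n * r i := by
    intro i hi
    simp at hi
    rcases eq_or_lt_of_le hi.2 with rfl | hin
    · rfl
    by_cases hri : r i = 0
    · simp [hri]
    have hf := hflow i hi.1 hin
    have hp := hπ i (by simp; omega)
    rcases max_cases (flow ν ψ (i - 1) - lam * (π i * ψ i)) 0 with ⟨h, h'⟩ | ⟨h, h'⟩
    · exfalso; apply hri; simp only [hr]; linarith
    have hfi : flow ν ψ i = 0 := by linarith
    have hprev : 0 ≤ flow ν ψ (i - 1) := by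
      rcases Nat.lt_or_ge 1 i with h1 | h1
      · rw [hflow (i - 1) (by omega) (by omega)]; exact le_max_right _ _
      · have : i - 1 = 0 := by omega
        simp [this, flow, hν0]
    have hψi : 0 < ψ i := by
      have h3 : 0 < lam * (π i * ψ i) := by linarith
      have h4 : 0 < π i * ψ i := (pos_iff_pos_of_mul_pos h3).1 hlam
      exact (pos_iff_pos_of_mul_pos h4).1 hp
    have := (hfreeze i (n - 1) hi.1 hin hψi hfi (by omega) (by omega)).2
    rw [show n - 1 + 1 = n by omega] at this
    rw [this]
  refine ⟨?_, ?_⟩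
  · rw [hEr ψ, Finset.sum_congr rfl hrz, ← Finset.mul_sum, hsum]
    have : piMean n π (fun i => ψ i * ψ i) = varPi n π ψ + piMean n π ψ ^ 2 := by
      simp only [varPi, pow_two]; ring
    rw [this]; ring
  · obtain ⟨h, hhm, -, hhn, hh12, hEL⟩ := exists_mono n hn π ν hπ hπ1 hν gap hgap
    have hEpos : 0 < EForm n ν h ψ := by
      refine Finset.sum_pos' (fun i hi => ?_) ⟨1, by simp; omega, ?_⟩
      · simp at hi
        have h1 := hhm (Nat.le_succ i)
        have h2 := hmono i (i + 1) hi.1 (by omega) (by omega)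
        refine mul_nonneg (mul_nonneg_of_nonpos_of_nonpos ?_ ?_) (hν i (by simp; omega)).le
        · simpa using h1
        · linarith
      · refine mul_pos (mul_pos_of_neg_of_neg ?_ ?_) (hν 1 (by simp; omega))
        · simpa using hh12
        · simpa using h12
    have h1 := hEL ψ
    have h2 := hEr h
    have hcomm : piMean n π (fun i => ψ i * h i) = piMean n π (fun i => h i * ψ i) := by
      simp only [mul_comm]
    rw [EForm_comm, hcomm] at h2
    set P := piMean n π (fun i => h i * ψ i) with hP
    have hPpos : 0 < P := by
      rw [h1] at hEpos
      exact (pos_iff_pos_of_mul_pos hEpos).1 hg0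
    have h3 : ∑ i ∈ Finset.Icc 1 n, h i * r i ≤ h n * (lam * piMean n π ψ) := by
      rw [← hsum, Finset.mul_sum]
      refine Finset.sum_le_sum fun i hi => ?_
      simp at hi
      rcases eq_or_lt_of_le hi.2 with rfl | hin
      · exact le_rfl
      · exact mul_le_mul_of_nonneg_right (hhm hi.2) (hr0 i hi.1 hin)
    have h4 : (lam - gap) * P ≤ h n * lam * piMean n π ψ := by nlinarith
    have hc : 0 < h n * lam := by positivity
    constructor
    · intro hlt
      have : 0 < (lam - gap) * P := mul_pos (by linarith) hPpos
      exact (pos_iff_pos_of_mul_pos (this.trans_le h4)).1 hc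
    · intro heq
      rw [heq, sub_self, zero_mul] at h4
      rw [heq] at hc
      exact nonneg_of_mul_nonneg_right h4 hc

/-- If the updated value is the gap then the parameter was the gap (for `n ≥ 3`). -/
theorem step_eq (n : ℕ) (hn : 3 ≤ n) (π ν : ℕ → ℝ) (hπ : ∀ i ∈ Finset.Icc 1 n, 0 < π i)
    (hπ1 : ∑ i ∈ Finset.Icc 1 n, π i = 1) (hν : ∀ i ∈ Finset.Icc 1 (n - 1), 0 < ν i)
    (hν0 : ν 0 = 0) (hνn : ν n = 0) (gap : ℝ) (hgap : IsSpectralGap n π ν gap)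
    (a : ℝ) (ha : 0 < a) (lam : ℝ) (hlam : 0 < lam)
    (ψ : ℕ → ℝ) (hψ1 : ψ 1 = -a) (hrec : PosPartRec n π ν lam ψ)
    (hE : EForm n ν ψ ψ = gap * varPi n π ψ) : lam = gap := by
  obtain ⟨hflow, hmono, ⟨hf1, h12⟩, hfreeze, hvar, hnc, hmn⟩ :=
    step_facts n (by omega) π ν hπ hπ1 hν hν0 a ha lam hlam ψ hψ1 hrec
  have hg0 := gap_pos n π ν hπ hπ1 hν gap hgap
  set m := piMean n π ψ with hm
  have hloc : ∀ i ∈ Finset.Icc 1 n,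
      flow ν ψ (i - 1) - flow ν ψ i = gap * (π i * (ψ i - m)) := by
    intro i hi
    have h := euler_lagrange n π ν hπ hπ1 hν gap hgap ψ hE (fun j => if j = i then 1 else 0)
    rw [EForm_eq n (by omega) ν ψ _ hν0 hνn] at h
    simp only [piMean, ite_mul, one_mul, zero_mul, mul_ite, mul_one, mul_zero,
      Finset.sum_ite_eq', hi, if_true] at h
    simp only [piMean] at hm
    rw [h, ← hm]; ring
  have hp1 := hπ 1 (by simp; omega)
  have hp2 := hπ 2 (by simp; omega)
  have hpn := hπ n (by simp; omega)
  have e1 := hloc 1 (by simp; omega)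
  have e2 := hloc 2 (by simp; omega)
  have en := hloc n (by simp; omega)
  have f0 : flow ν ψ (1 - 1) = 0 := by simp [flow, hν0]
  have fn : flow ν ψ n = 0 := by simp [flow, hνn]
  have k1 : lam * ψ 1 = gap * (ψ 1 - m) := by
    rw [f0, hf1] at e1
    rw [hψ1] at e1 ⊢
    apply mul_left_cancel₀ hp1.ne'
    linarith
  have f2 := hflow 2 (by omega) (by omega)
  simp only [show 2 - 1 = 1 from rfl] at e2 f2
  rcases max_cases (flow ν ψ 1 - lam * (π 2 * ψ 2)) 0 with ⟨h, h'⟩ | ⟨h, h'⟩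
  · have k2 : lam * ψ 2 = gap * (ψ 2 - m) := by
      apply mul_left_cancel₀ hp2.ne'
      linarith
    have : (lam - gap) * (ψ 2 - ψ 1) = 0 := by linarith
    rcases mul_eq_zero.1 this with h | h <;> linarith
  · exfalso
    have hz : flow ν ψ 2 = 0 := by linarith
    have hψ2 : 0 < ψ 2 := by
      have h3 : 0 < lam * (π 2 * ψ 2) := by
        have : 0 < lam * (π 1 * a) := by positivity
        linarith
      have h4 : 0 < π 2 * ψ 2 := (pos_iff_pos_of_mul_pos h3).1 hlam
      exact (pos_iff_pos_of_mul_pos h4).1 hp2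
    have := (hfreeze 2 (n - 1) (by omega) (by omega) hψ2 hz (by omega) (by omega)).1
    rw [this, fn] at en
    have : 0 < gap * (π n * (ψ n - m)) := mul_pos hg0 (mul_pos hpn (by linarith))
    linarith

/-- The solution of the recursion, as a function of the parameter. -/
noncomputable def sol (π ν : ℕ → ℝ) (a lam : ℝ) : ℕ → ℝ × ℝ
  | 0 => (-a, -a)
  | 1 => (-a, -a)
  | (i + 2) =>
    let p := sol π ν a lam (i + 1)
    (p.1 + max ((p.1 - p.2) * ν i - lam * (π (i + 1) * p.1)) 0 / ν (i + 1), p.1)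

theorem sol_cont (π ν : ℕ → ℝ) (a : ℝ) (i : ℕ) : Continuous fun lam => sol π ν a lam i := by
  induction i with
  | zero => simp only [sol]; fun_prop
  | succ i ih =>
    cases i with
    | zero => simp only [sol]; fun_prop
    | succ i =>
      simp only [sol]
      have h1 : Continuous fun lam => (sol π ν a lam (i + 1)).1 := ih.fst
      have h2 : Continuous fun lam => (sol π ν a lam (i + 1)).2 := ih.snd
      fun_prop

theorem sol_snd (π ν : ℕ → ℝ) (a lam : ℝ) (i : ℕ) (hi : 1 ≤ i) :
    (sol π ν a lam i).2 = (sol π ν a lam (i - 1)).1 := by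
  obtain ⟨j, rfl⟩ : ∃ j, i = j + 1 := ⟨i - 1, by omega⟩
  cases j with
  | zero => simp [sol]
  | succ j => simp [sol]

theorem sol_rec (n : ℕ) (π ν : ℕ → ℝ) (a lam : ℝ) :
    PosPartRec n π ν lam (fun i => (sol π ν a lam i).1) := by
  intro i h1 _
  have h := sol_snd π ν a lam i h1
  obtain ⟨j, rfl⟩ : ∃ j, i = j + 1 := ⟨i - 1, by omega⟩
  simp only [sol, Nat.add_sub_cancel] at h ⊢
  rw [h]

theorem sol_unique (n : ℕ) (π ν : ℕ → ℝ) (hν0 : ν 0 = 0) (a lam : ℝ) (ψ : ℕ → ℝ)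
    (hψ1 : ψ 1 = -a) (hrec : PosPartRec n π ν lam ψ) (i : ℕ) (h1 : 1 ≤ i) :
    i ≤ n → ψ i = (sol π ν a lam i).1 := by
  induction i using Nat.strong_induction_on with
  | _ i ih =>
    intro hin
    rcases Nat.lt_or_ge 1 i with h | h
    · obtain ⟨j, rfl⟩ : ∃ j, i = j + 1 := ⟨i - 1, by omega⟩
      rw [hrec j (by omega) (by omega)]
      have hs := sol_rec n π ν a lam j (by omega) (by omega)
      simp only at hs
      rw [hs, ih j (by omega) (by omega) (by omega)]
      rcases Nat.lt_or_ge 1 j with h' | h'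
      · rw [ih (j - 1) (by omega) (by omega) (by omega)]
      · have : j - 1 = 0 := by omega
        rw [this, hν0]; simp
    · have : i = 1 := by omega
      subst this
      simp [sol, hψ1]

theorem stmt1 (n : ℕ) (hn : 2 ≤ n) (π ν : ℕ → ℝ)
    (hπ : ∀ i ∈ Finset.Icc 1 n, 0 < π i)
    (hπ1 : ∑ i ∈ Finset.Icc 1 n, π i = 1)
    (hν : ∀ i ∈ Finset.Icc 1 (n - 1), 0 < ν i)
    (hν0 : ν 0 = 0) (hνn : ν n = 0)
    (gap : ℝ) (hgap : IsSpectralGap n π ν gap)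
    (a : ℝ) (ha : 0 < a)
    (lamSeq : ℕ → ℝ) (hlam0 : 0 < lamSeq 0)
    (ψ : ℕ → ℕ → ℝ)
    (hψ1 : ∀ k, ψ k 1 = -a)
    (hrec : ∀ k, PosPartRec n π ν (lamSeq k) (ψ k))
    (hupd : ∀ k, lamSeq (k + 1) = EForm n ν (ψ k) (ψ k) / varPi n π (ψ k)) :
    (n = 2 → ∀ k, 1 ≤ k → lamSeq k = gap) ∧
    (3 ≤ n →
      (lamSeq 0 = gap → ∀ k, lamSeq k = gap) ∧
      (lamSeq 0 ≠ gap → ∀ k, 1 ≤ k → lamSeq (k + 1) < lamSeq k ∧ gap < lamSeq (k + 1)) ∧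
      (∃ lamStar : ℝ, ∃ ψStar : ℕ → ℝ,
        Filter.Tendsto lamSeq Filter.atTop (nhds lamStar) ∧
        (∀ i ∈ Finset.Icc 1 n,
          Filter.Tendsto (fun k => ψ k i) Filter.atTop (nhds (ψStar i))) ∧
        lamStar = EForm n ν ψStar ψStar / varPi n π ψStar ∧
        lamStar = gap ∧ piMean n π ψStar = 0)) := by
  have hg0 := gap_pos n π ν hπ hπ1 hν gap hgap
  have hge : ∀ k, 0 < lamSeq k → gap ≤ lamSeq (k + 1) := by
    intro k hk
    obtain ⟨-, -, -, -, -, hnc, -⟩ :=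
      step_facts n hn π ν hπ hπ1 hν hν0 a ha (lamSeq k) hk (ψ k) (hψ1 k) (hrec k)
    rw [hupd k]
    exact hgap.2 ⟨ψ k, hnc, rfl⟩
  have hpos : ∀ k, 0 < lamSeq k := by
    intro k
    induction k with
    | zero => exact hlam0
    | succ k ih => exact hg0.trans_le (hge k ih)
  have hge' : ∀ k, gap ≤ lamSeq (k + 1) := fun k => hge k (hpos k)
  have hvar : ∀ k, 0 < varPi n π (ψ k) := fun k =>
    (step_facts n hn π ν hπ hπ1 hν hν0 a ha (lamSeq k) (hpos k) (ψ k) (hψ1 k)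
      (hrec k)).2.2.2.2.1
  have hmn : ∀ k, piMean n π (ψ k) < ψ k n := fun k =>
    (step_facts n hn π ν hπ hπ1 hν hν0 a ha (lamSeq k) (hpos k) (ψ k) (hψ1 k)
      (hrec k)).2.2.2.2.2.2
  have hmain := fun k => step_main n hn π ν hπ hπ1 hν hν0 hνn gap hgap a ha (lamSeq k) (hpos k)
    (ψ k) (hψ1 k) (hrec k)
  have hlt : ∀ k, gap < lamSeq k → lamSeq (k + 1) < lamSeq k := by
    intro k hk
    obtain ⟨h1, h2, -⟩ := hmain k
    rw [hupd k, div_lt_iff₀ (hvar k), h1]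
    refine mul_lt_mul_of_pos_left ?_ (hpos k)
    have := mul_neg_of_pos_of_neg (h2 hk) (sub_neg.2 (hmn k))
    linarith
  have heq : ∀ k, lamSeq k = gap → lamSeq (k + 1) = gap := by
    intro k hk
    refine le_antisymm ?_ (hge' k)
    obtain ⟨h1, -, h2⟩ := hmain k
    rw [← hk, hupd k, div_le_iff₀ (hvar k), h1]
    refine mul_le_mul_of_nonneg_left ?_ (hpos k).le
    have := mul_nonpos_of_nonneg_of_nonpos (h2 hk) (sub_neg.2 (hmn k)).le
    linarith
  refine ⟨?_, ?_⟩
  · intro hn2 k hk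
    obtain ⟨j, rfl⟩ : ∃ j, k = j + 1 := ⟨k - 1, by omega⟩
    obtain ⟨f, hf, hgf⟩ := hgap.1
    have hfv := var_pos n π f hπ hπ1 hf
    have hjv := hvar j
    rw [hupd j, hgf, div_eq_div_iff hjv.ne' hfv.ne']
    have key : ∀ g : ℕ → ℝ, varPi n π g = π 1 * π 2 * (g 1 - g 2) ^ 2 := by
      intro g
      have h := two_var n π g hπ1
      subst hn2
      simp only [Finset.sum_Icc_succ_top (show 1 ≤ 1 + 1 by omega), Finset.Icc_self,
        Finset.sum_singleton] at h
      norm_num at h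
      linarith [h, sq_nonneg (g 1), (by ring : (g 2 - g 1) ^ 2 = (g 1 - g 2) ^ 2)]
    rw [key, key]
    subst hn2
    simp only [EForm, show 2 - 1 = 1 from rfl, Finset.Icc_self, Finset.sum_singleton]
    norm_num
    ring
  · intro hn3
    refine ⟨?_, ?_, ?_⟩
    · intro h0 k
      induction k with
      | zero => exact h0
      | succ k ih => exact heq k ih
    · intro h0 k hk
      have hne : ∀ k, lamSeq k ≠ gap := by
        intro k
        induction k with
        | zero => exact h0
        | succ k ih =>
          intro hc
          apply ih
          refine step_eq n hn3 π ν hπ hπ1 hν hν0 hνn gap hgap a ha (lamSeq k) (hpos k)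
            (ψ k) (hψ1 k) (hrec k) ?_
          rw [← hc, hupd k]
          have := (hvar k).ne'
          field_simp
      have hgt : ∀ k, gap < lamSeq (k + 1) := fun k => lt_of_le_of_ne (hge' k) (hne (k + 1)).symm
      obtain ⟨j, rfl⟩ : ∃ j, k = j + 1 := ⟨k - 1, by omega⟩
      exact ⟨hlt _ (hgt j), hgt _⟩
    · have hanti : Antitone fun k => lamSeq (k + 1) := by
        refine antitone_nat_of_succ_le fun k => ?_
        rcases eq_or_lt_of_le (hge' k) with h | h
        · rw [heq (k + 1) h.symm, h]
        · exact (hlt (k + 1) h).le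
      have hbdd : BddBelow (Set.range fun k => lamSeq (k + 1)) := by
        refine ⟨gap, ?_⟩
        rintro _ ⟨k, rfl⟩
        exact hge' k
      have hlim' := tendsto_atTop_ciInf hanti hbdd
      set L := ⨅ k, lamSeq (k + 1) with hL
      have hLge : gap ≤ L := ge_of_tendsto' hlim' hge'
      have hlim : Filter.Tendsto lamSeq Filter.atTop (nhds L) :=
        (Filter.tendsto_add_atTop_iff_nat 1).1 hlim'
      have hL0 : 0 < L := hg0.trans_le hLge
      set φ : ℕ → ℝ := fun i => (sol π ν a L i).1 with hφ
      have hφ1 : φ 1 = -a := by simp [hφ, sol]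
      have hφr : PosPartRec n π ν L φ := sol_rec n π ν a L
      have hconv : ∀ i ∈ Finset.Icc 1 n,
          Filter.Tendsto (fun k => ψ k i) Filter.atTop (nhds (φ i)) := by
        intro i hi
        simp only [Finset.mem_Icc] at hi
        have h1 : ∀ k, ψ k i = (sol π ν a (lamSeq k) i).1 := fun k =>
          sol_unique n π ν hν0 a (lamSeq k) (ψ k) (hψ1 k) (hrec k) i hi.1 hi.2
        simp only [h1]
        exact (((sol_cont π ν a i).fst).tendsto L).comp hlim
      obtain ⟨-, -, -, -, hvφ, -, hmφ⟩ :=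
        step_facts n hn π ν hπ hπ1 hν hν0 a ha L hL0 φ hφ1 hφr
      obtain ⟨m1, m2, m3⟩ :=
        step_main n hn π ν hπ hπ1 hν hν0 hνn gap hgap a ha L hL0 φ hφ1 hφr
      have hEc : Filter.Tendsto (fun k => EForm n ν (ψ k) (ψ k)) Filter.atTop
          (nhds (EForm n ν φ φ)) := by
        unfold EForm
        refine tendsto_finsetSum _ fun i hi => ?_
        simp only [Finset.mem_Icc] at hi
        have h1 := hconv i (by simp; omega)
        have h2 := hconv (i + 1) (by simp; omega)
        exact ((h1.sub h2).mul (h1.sub h2)).mul_const _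
      have hVc : Filter.Tendsto (fun k => varPi n π (ψ k)) Filter.atTop
          (nhds (varPi n π φ)) := by
        unfold varPi piMean
        refine Filter.Tendsto.sub (tendsto_finsetSum _ fun i hi => ?_)
          (Filter.Tendsto.pow (tendsto_finsetSum _ fun i hi => ?_) 2)
        · exact ((hconv i hi).pow 2).mul_const _
        · exact (hconv i hi).mul_const _
      have hLE : L = EForm n ν φ φ / varPi n π φ := by
        refine tendsto_nhds_unique hlim' ?_
        simp only [hupd]
        exact hEc.div hVc hvφ.ne'
      have hm0 : piMean n π φ = 0 := by
        rw [eq_div_iff hvφ.ne', m1] at hLE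
        have h1 : L * (piMean n π φ * (piMean n π φ - φ n)) = 0 := by linarith
        rcases mul_eq_zero.1 h1 with h | h
        · exact absurd h hL0.ne'
        · rcases mul_eq_zero.1 h with h | h
          · exact h
          · linarith
      have hLgap : L = gap := by
        rcases eq_or_lt_of_le hLge with h | h
        · exact h.symm
        · have := m2 h
          linarith
      exact ⟨L, φ, hlim, hconv, hLE, hLgap, hm0⟩
end

section
/- Let λ > 0 and let ψ be a non-constant function on V such that (λ,ψ) satisfies the Euler–Lagrange equation. Then λ = λ^G_{π,ν} if and only if ψ is monotonic (i.e. ψ(i) ≤ ψ(i+1) for all 1 ≤ i < n, or ψ(i) ≥ ψ(i+1) for all 1 ≤ i < n). -/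
open Finset

/-- The Euler–Lagrange equation:
`λ π(i) ψ(i) = [ψ(i)−ψ(i−1)] ν(i−1,i) + [ψ(i)−ψ(i+1)] ν(i,i+1)` for `1 ≤ i ≤ n`. -/
def EulerLagrange (n : ℕ) (π ν : ℕ → ℝ) (lam : ℝ) (ψ : ℕ → ℝ) : Prop :=
  ∀ i ∈ Finset.Icc 1 n,
    lam * (π i * ψ i) = (ψ i - ψ (i - 1)) * ν (i - 1) + (ψ i - ψ (i + 1)) * ν i

theorem aux_parts (e g : ℕ → ℝ) (m : ℕ) :
    ∑ i ∈ Finset.Icc 1 (m+1), (e (i-1) - e i) * g i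
      = ∑ i ∈ Finset.Icc 1 m, e i * (g (i+1) - g i) + e 0 * g 1 - e (m+1) * g (m+1) := by
  induction m with
  | zero => simp; ring
  | succ m ih =>
    rw [Finset.sum_Icc_succ_top (by omega), ih, Finset.sum_Icc_succ_top (by omega)]
    simp only [Nat.add_sub_cancel]
    ring

theorem aux_EL (n : ℕ) (hn : 2 ≤ n) (π ν : ℕ → ℝ) (hν0 : ν 0 = 0) (hνn : ν n = 0)
    (lam : ℝ) (ψ : ℕ → ℝ) (hEL : EulerLagrange n π ν lam ψ) (g : ℕ → ℝ) :
    lam * piMean n π (fun i => ψ i * g i) = EForm n ν ψ g := by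
  obtain ⟨m, rfl⟩ : ∃ m, n = m + 1 := ⟨n - 1, by omega⟩
  have h := aux_parts (fun k => (ψ (k+1) - ψ k) * ν k) g m
  simp only [hν0, hνn, mul_zero, zero_mul, add_zero, sub_zero] at h
  have h1 : EForm (m+1) ν ψ g =
      ∑ i ∈ Finset.Icc 1 m, (ψ (i+1) - ψ i) * ν i * (g (i+1) - g i) := by
    unfold EForm
    simp only [Nat.add_sub_cancel]
    apply Finset.sum_congr rfl
    intro i _
    ring
  rw [h1, ← h]
  unfold piMean
  rw [Finset.mul_sum]
  apply Finset.sum_congr rfl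
  intro i hi
  have := hEL i hi
  have hi' := Finset.mem_Icc.1 hi
  rw [Nat.sub_add_cancel hi'.1]
  linear_combination (g i) * this

theorem aux_cov (n : ℕ) (π : ℕ → ℝ) (hπ1 : ∑ i ∈ Finset.Icc 1 n, π i = 1) (f g : ℕ → ℝ) :
    ∑ i ∈ Finset.Icc 1 n, ∑ j ∈ Finset.Icc 1 n, π i * π j * ((f i - f j) * (g i - g j))
      = 2 * (piMean n π (fun i => f i * g i) - piMean n π f * piMean n π g) := by
  have h : ∀ i j, π i * π j * ((f i - f j) * (g i - g j)) =
      (f i * g i * π i) * π j - (f i * π i) * (g j * π j) - (g i * π i) * (f j * π j)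
        + π i * (f j * g j * π j) := by intros; ring
  simp only [h, Finset.sum_add_distrib, Finset.sum_sub_distrib, ← Finset.mul_sum,
    ← Finset.sum_mul, hπ1]
  unfold piMean
  ring

theorem aux_var (n : ℕ) (π : ℕ → ℝ) (hπ1 : ∑ i ∈ Finset.Icc 1 n, π i = 1) (f : ℕ → ℝ) :
    2 * varPi n π f =
    ∑ i ∈ Finset.Icc 1 n, ∑ j ∈ Finset.Icc 1 n, π i * π j * (f i - f j)^2 := by
  have := aux_cov n π hπ1 f f
  simp only [← pow_two] at this
  rw [this]; rfl

theorem aux_var_lt (n : ℕ) (π : ℕ → ℝ) (hπ : ∀ i ∈ Finset.Icc 1 n, 0 < π i)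
    (hπ1 : ∑ i ∈ Finset.Icc 1 n, π i = 1) (f g : ℕ → ℝ)
    (h : ∀ i ∈ Finset.Icc 1 n, ∀ j ∈ Finset.Icc 1 n, (f i - f j)^2 ≤ (g i - g j)^2)
    (h' : ∃ i ∈ Finset.Icc 1 n, ∃ j ∈ Finset.Icc 1 n, (f i - f j)^2 < (g i - g j)^2) :
    varPi n π f < varPi n π g := by
  have : 2 * varPi n π f < 2 * varPi n π g := by
    rw [aux_var n π hπ1, aux_var n π hπ1]
    obtain ⟨i, hi, j, hj, hij⟩ := h'
    have key : ∀ a ∈ Finset.Icc 1 n, ∀ b ∈ Finset.Icc 1 n,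
        π a * π b * (f a - f b)^2 ≤ π a * π b * (g a - g b)^2 := fun a ha b hb =>
      mul_le_mul_of_nonneg_left (h a ha b hb) (mul_pos (hπ a ha) (hπ b hb)).le
    apply Finset.sum_lt_sum
    · exact fun a ha => Finset.sum_le_sum (key a ha)
    · exact ⟨i, hi, Finset.sum_lt_sum (key i hi)
        ⟨j, hj, mul_lt_mul_of_pos_left hij (mul_pos (hπ i hi) (hπ j hj))⟩⟩
  linarith

theorem aux_var_pos (n : ℕ) (π : ℕ → ℝ) (hπ : ∀ i ∈ Finset.Icc 1 n, 0 < π i)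
    (hπ1 : ∑ i ∈ Finset.Icc 1 n, π i = 1) (f : ℕ → ℝ) (hf : Nonconstant n f) :
    0 < varPi n π f := by
  have := aux_var_lt n π hπ hπ1 (fun _ => 0) f (fun i _ j _ => by simpa using sq_nonneg _) (by
    obtain ⟨i, hi, j, hj, hij⟩ := hf
    refine ⟨i, hi, j, hj, ?_⟩
    have : f i - f j ≠ 0 := sub_ne_zero.2 hij
    simpa using (by positivity : 0 < (f i - f j)^2))
  simpa [varPi, piMean] using this

theorem aux_mean (n : ℕ) (hn : 2 ≤ n) (π ν : ℕ → ℝ) (hν0 : ν 0 = 0) (hνn : ν n = 0)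
    (lam : ℝ) (hlam : 0 < lam) (ψ : ℕ → ℝ) (hEL : EulerLagrange n π ν lam ψ) :
    piMean n π ψ = 0 := by
  have := aux_EL n hn π ν hν0 hνn lam ψ hEL (fun _ => 1)
  simp only [EForm, mul_one, sub_self, mul_zero, zero_mul, Finset.sum_const_zero] at this
  exact (mul_eq_zero.1 this).resolve_left hlam.ne'

theorem aux_ray (n : ℕ) (hn : 2 ≤ n) (π ν : ℕ → ℝ) (hν0 : ν 0 = 0) (hνn : ν n = 0)
    (lam : ℝ) (hlam : 0 < lam) (ψ : ℕ → ℝ) (hEL : EulerLagrange n π ν lam ψ) :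
    EForm n ν ψ ψ = lam * varPi n π ψ := by
  rw [← aux_EL n hn π ν hν0 hνn lam ψ hEL, varPi, aux_mean n hn π ν hν0 hνn lam hlam ψ hEL]
  simp [pow_two]

/-- A non-decreasing non-constant solution is strictly increasing. -/
theorem aux_strict (n : ℕ) (π ν : ℕ → ℝ)
    (hπ : ∀ i ∈ Finset.Icc 1 n, 0 < π i)
    (hν : ∀ i ∈ Finset.Icc 1 (n - 1), 0 < ν i)
    (hν0 : ν 0 = 0) (hνn : ν n = 0)
    (lam : ℝ) (hlam : 0 < lam)
    (ψ : ℕ → ℝ) (hψ : Nonconstant n ψ) (hEL : EulerLagrange n π ν lam ψ)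
    (hm : ∀ i, 1 ≤ i → i < n → ψ i ≤ ψ (i + 1)) :
    ∀ i, 1 ≤ i → i < n → ψ i < ψ (i + 1) := by
  by_contra! hc
  obtain ⟨k, hk1, hkn, hk⟩ := hc
  have hk : ψ (k+1) = ψ k := le_antisymm hk (hm k hk1 hkn)
  have e0 : ∀ i, i ≤ n → 0 ≤ (ψ (i+1) - ψ i) * ν i := by
    intro i hi
    rcases Nat.eq_zero_or_pos i with rfl | h1
    · simp [hν0]
    rcases hi.eq_or_lt with rfl | h2
    · simp [hνn]
    · exact mul_nonneg (sub_nonneg.2 (hm i h1 h2))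
        (hν i (Finset.mem_Icc.2 ⟨h1, by omega⟩)).le
  have step : ∀ i, 1 ≤ i → i < n → ψ (i+1) = ψ i →
      (ψ i - ψ (i-1)) * ν (i-1) = 0 ∧ (ψ (i+2) - ψ (i+1)) * ν (i+1) = 0 := by
    intro i h1 h2 h
    have ha := hEL i (Finset.mem_Icc.2 ⟨h1, h2.le⟩)
    have hb := hEL (i+1) (Finset.mem_Icc.2 ⟨by omega, h2⟩)
    have hpa := hπ i (Finset.mem_Icc.2 ⟨h1, h2.le⟩)
    have hpb := hπ (i+1) (Finset.mem_Icc.2 ⟨by omega, h2⟩)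
    have e1 := e0 (i-1) (by omega)
    have e2 := e0 (i+1) h2
    rw [Nat.sub_add_cancel h1] at e1
    simp only [Nat.add_sub_cancel, h, sub_self, zero_mul, add_zero, zero_add] at ha hb
    rw [show i + 1 + 1 = i + 2 from rfl] at hb e2
    rw [h] at e2 ⊢
    have hz : ψ i = 0 := by
      apply le_antisymm
      · by_contra! hp
        have : 0 < lam * (π (i+1) * ψ i) := by positivity
        linarith
      · by_contra! hp
        have : 0 < lam * (π i * (- ψ i)) := by
          have : 0 < - ψ i := by linarith
          positivity
        linarith
    constructor
    · rw [← ha, hz]; ring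
    · have : lam * (π (i+1) * ψ i) = 0 := by rw [hz]; ring
      linarith
  have up : ∀ i, k ≤ i → i < n → ψ (i+1) = ψ i := by
    intro i hi
    induction i, hi using Nat.le_induction with
    | base => exact fun _ => hk
    | succ i hi ih =>
      intro h
      have h3 := (step i (by omega) (by omega) (ih (by omega))).2
      have h4 := hν (i+1) (Finset.mem_Icc.2 ⟨by omega, by omega⟩)
      have := (mul_eq_zero.1 h3).resolve_right h4.ne'
      exact sub_eq_zero.1 this
  have down : ∀ t i, i + t = k → 1 ≤ i → ψ (i+1) = ψ i := by
    intro t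
    induction t with
    | zero => intro i hi _; obtain rfl : i = k := by omega
              exact hk
    | succ t ih =>
      intro i hi h1
      have h3 := (step (i+1) (by omega) (by omega) (ih (i+1) (by omega) (by omega))).1
      have h4 := hν i (Finset.mem_Icc.2 ⟨by omega, by omega⟩)
      exact sub_eq_zero.1 ((mul_eq_zero.1 h3).resolve_right h4.ne')
  have all : ∀ i, 1 ≤ i → i < n → ψ (i+1) = ψ i := by
    intro i h1 h2
    rcases le_total k i with h | h
    · exact up i h h2
    · exact down (k - i) i (by omega) h1
  have const : ∀ i, 1 ≤ i → i ≤ n → ψ i = ψ 1 := by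
    intro i h1
    induction i, h1 using Nat.le_induction with
    | base => intro _; rfl
    | succ i h1 ih => intro h; rw [all i h1 (by omega), ih (by omega)]
  obtain ⟨i, hi, j, hj, hij⟩ := hψ
  rw [Finset.mem_Icc] at hi hj
  exact hij (by rw [const i hi.1 hi.2, const j hj.1 hj.2])

theorem aux_poinc (n : ℕ) (hn : 2 ≤ n) (π ν : ℕ → ℝ)
    (hπ : ∀ i ∈ Finset.Icc 1 n, 0 < π i)
    (hπ1 : ∑ i ∈ Finset.Icc 1 n, π i = 1)
    (hν0 : ν 0 = 0) (hνn : ν n = 0)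
    (lam : ℝ) (hlam : 0 < lam)
    (ψ : ℕ → ℝ) (hEL : EulerLagrange n π ν lam ψ)
    (hs : ∀ i, 1 ≤ i → i < n → ψ i < ψ (i + 1)) (f : ℕ → ℝ) :
    lam * varPi n π f ≤ EForm n ν f f := by
  set W : ℕ → ℝ := fun i => ∑ k ∈ Finset.range i, (f (k+1) - f k)^2 / (ψ (k+1) - ψ k) with hW
  have hWs : ∀ i, W (i+1) = W i + (f (i+1) - f i)^2 / (ψ (i+1) - ψ i) := fun i => by
    simp only [hW, Finset.sum_range_succ]
  have key : ∀ j, 1 ≤ j → ∀ i, j ≤ i → i ≤ n →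
      ψ j ≤ ψ i ∧ W j ≤ W i ∧ (f i - f j)^2 ≤ (ψ i - ψ j) * (W i - W j) := by
    intro j hj i hi
    induction i, hi using Nat.le_induction with
    | base => intro _; simp
    | succ i hi ih =>
      intro h
      obtain ⟨a1, a2, a3⟩ := ih (by omega)
      have hd := hs i (by omega) (by omega)
      have hd' : 0 < ψ (i+1) - ψ i := sub_pos.2 hd
      have hq : 0 ≤ (f (i+1) - f i)^2 / (ψ (i+1) - ψ i) := by positivity
      refine ⟨by linarith, by rw [hWs]; linarith, ?_⟩
      rw [hWs]
      set d := ψ (i+1) - ψ i with hdd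
      set w := (f (i+1) - f i)^2 / d with hw
      have hwd : (f (i+1) - f i)^2 = d * w := by rw [hw]; field_simp
      set x := f i - f j
      set y := f (i+1) - f i
      set p := ψ i - ψ j
      set q := W i - W j
      have hp : 0 ≤ p := sub_nonneg.2 a1
      have hqq : 0 ≤ q := sub_nonneg.2 a2
      have e1 : f (i+1) - f j = x + y := by ring
      have e2 : ψ (i+1) - ψ j = p + d := by ring
      have e3 : W i + w - W j = q + w := by ring
      rw [e1, e2, e3]
      have h2 : (2 * (x * y)) ≤ p * w + d * q := by
        apply le_of_abs_le
        apply abs_le_of_sq_le_sq _ (by positivity)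
        have h5 : x^2 * y^2 ≤ (p * q) * (d * w) := by
          rw [hwd]
          exact mul_le_mul_of_nonneg_right a3 (by positivity)
        nlinarith [sq_nonneg (p * w - d * q)]
      nlinarith
  have key2 : ∀ i ∈ Finset.Icc 1 n, ∀ j ∈ Finset.Icc 1 n,
      (f i - f j)^2 ≤ (ψ i - ψ j) * (W i - W j) := by
    intro i hi j hj
    rw [Finset.mem_Icc] at hi hj
    rcases le_total j i with h | h
    · exact (key j hj.1 i h hi.2).2.2
    · have := (key i hi.1 j h hj.2).2.2
      nlinarith
  have h1 : 2 * varPi n π f ≤ 2 * piMean n π (fun i => ψ i * W i) := by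
    have hc := aux_cov n π hπ1 ψ W
    rw [aux_mean n hn π ν hν0 hνn lam hlam ψ hEL, zero_mul, sub_zero] at hc
    rw [aux_var n π hπ1, ← hc]
    exact Finset.sum_le_sum fun i hi => Finset.sum_le_sum fun j hj =>
      mul_le_mul_of_nonneg_left (key2 i hi j hj) (mul_pos (hπ i hi) (hπ j hj)).le
  have h2 := aux_EL n hn π ν hν0 hνn lam ψ hEL W
  have h3 : EForm n ν ψ W = EForm n ν f f := by
    unfold EForm
    apply Finset.sum_congr rfl
    intro i hi
    rw [Finset.mem_Icc] at hi
    have hd := hs i (by omega) (by omega)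
    have hd' : ψ (i+1) - ψ i ≠ 0 := (sub_pos.2 hd).ne'
    rw [hWs]
    field_simp
    ring
  rw [← h3, ← h2]
  exact mul_le_mul_of_nonneg_left (by linarith) hlam.le

theorem aux_gap (n : ℕ) (hn : 2 ≤ n) (π ν : ℕ → ℝ)
    (hπ : ∀ i ∈ Finset.Icc 1 n, 0 < π i)
    (hπ1 : ∑ i ∈ Finset.Icc 1 n, π i = 1)
    (hν : ∀ i ∈ Finset.Icc 1 (n - 1), 0 < ν i)
    (hν0 : ν 0 = 0) (hνn : ν n = 0)
    (gap : ℝ) (hgap : IsSpectralGap n π ν gap)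
    (lam : ℝ) (hlam : 0 < lam)
    (ψ : ℕ → ℝ) (hψ : Nonconstant n ψ)
    (hEL : EulerLagrange n π ν lam ψ)
    (hm : ∀ i, 1 ≤ i → i < n → ψ i ≤ ψ (i + 1)) : lam = gap := by
  apply le_antisymm
  · obtain ⟨f, hf, hr⟩ := hgap.1
    rw [hr, le_div_iff₀ (aux_var_pos n π hπ hπ1 f hf)]
    exact aux_poinc n hn π ν hπ hπ1 hν0 hνn lam hlam ψ hEL
      (aux_strict n π ν hπ hν hν0 hνn lam hlam ψ hψ hEL hm) f
  · apply hgap.2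
    refine ⟨ψ, hψ, ?_⟩
    rw [aux_ray n hn π ν hν0 hνn lam hlam ψ hEL]
    rw [mul_div_cancel_right₀ _ (aux_var_pos n π hπ hπ1 ψ hψ).ne']

theorem aux_mono (n : ℕ) (hn : 2 ≤ n) (π ν : ℕ → ℝ)
    (hπ : ∀ i ∈ Finset.Icc 1 n, 0 < π i)
    (hπ1 : ∑ i ∈ Finset.Icc 1 n, π i = 1)
    (hν0 : ν 0 = 0) (hνn : ν n = 0)
    (lam : ℝ) (hgap : IsSpectralGap n π ν lam) (hlam : 0 < lam)
    (ψ : ℕ → ℝ) (hψ : Nonconstant n ψ)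
    (hEL : EulerLagrange n π ν lam ψ) :
      ((∀ i, 1 ≤ i → i < n → ψ i ≤ ψ (i + 1)) ∨
       (∀ i, 1 ≤ i → i < n → ψ (i + 1) ≤ ψ i)) := by
  by_contra! hc
  obtain ⟨⟨a, ha1, han, ha⟩, ⟨b, hb1, hbn, hb⟩⟩ := hc
  set F : ℕ → ℝ := fun i => ∑ k ∈ Finset.range i, |ψ (k+1) - ψ k| with hF
  have hFs : ∀ i, F (i+1) = F i + |ψ (i+1) - ψ i| := fun i => by
    simp only [hF, Finset.sum_range_succ]
  have key : ∀ j i, j ≤ i → |ψ i - ψ j| ≤ F i - F j := by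
    intro j i hi
    induction i, hi using Nat.le_induction with
    | base => simp
    | succ i hi ih =>
      rw [hFs]
      have := abs_sub_le (ψ (i+1)) (ψ i) (ψ j)
      linarith
  have keysq : ∀ i j, (ψ i - ψ j)^2 ≤ (F i - F j)^2 := by
    intro i j
    rw [sq_le_sq]
    rcases le_total j i with h | h
    · exact (key j i h).trans (le_abs_self _)
    · rw [abs_sub_comm, abs_sub_comm (F i)]
      exact (key i j h).trans (le_abs_self _)
  have hst : |ψ n - ψ 1| < F n - F 1 := by
    have a1 := abs_le.1 (key 1 a ha1)
    have a2 := abs_le.1 (key (a+1) n han)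
    have b1 := abs_le.1 (key 1 b hb1)
    have b2 := abs_le.1 (key (b+1) n hbn)
    have a3 := hFs a
    have b3 := hFs b
    rw [abs_of_neg (by linarith)] at a3
    rw [abs_of_pos (by linarith)] at b3
    rw [abs_lt]
    constructor <;> linarith [a1.1, a1.2, a2.1, a2.2, b1.1, b1.2, b2.1, b2.2]
  have hst2 : (ψ n - ψ 1)^2 < (F n - F 1)^2 := by
    rw [sq_lt_sq]; exact hst.trans_le (le_abs_self _)
  have m1 : 1 ∈ Finset.Icc 1 n := Finset.mem_Icc.2 ⟨le_rfl, by omega⟩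
  have mn : n ∈ Finset.Icc 1 n := Finset.mem_Icc.2 ⟨by omega, le_rfl⟩
  have hv := aux_var_lt n π hπ hπ1 ψ F (fun i _ j _ => keysq i j) ⟨n, mn, 1, m1, hst2⟩
  have hFn : Nonconstant n F := ⟨n, mn, 1, m1, fun h => by
    rw [h, sub_self] at hst; exact absurd hst (abs_nonneg _).not_gt⟩
  have hE : EForm n ν F F = EForm n ν ψ ψ := by
    unfold EForm
    apply Finset.sum_congr rfl
    intro i _
    rw [hFs]
    have := abs_mul_abs_self (ψ (i+1) - ψ i)
    linear_combination (ν i) * this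
  have h1 : lam ≤ EForm n ν F F / varPi n π F := hgap.2 ⟨F, hFn, rfl⟩
  rw [le_div_iff₀ (aux_var_pos n π hπ hπ1 F hFn), hE,
    aux_ray n hn π ν hν0 hνn lam hlam ψ hEL] at h1
  exact absurd (mul_lt_mul_of_pos_left hv hlam) h1.not_gt

theorem stmt4 (n : ℕ) (hn : 2 ≤ n) (π ν : ℕ → ℝ)
    (hπ : ∀ i ∈ Finset.Icc 1 n, 0 < π i)
    (hπ1 : ∑ i ∈ Finset.Icc 1 n, π i = 1)
    (hν : ∀ i ∈ Finset.Icc 1 (n - 1), 0 < ν i)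
    (hν0 : ν 0 = 0) (hνn : ν n = 0)
    (gap : ℝ) (hgap : IsSpectralGap n π ν gap)
    (lam : ℝ) (hlam : 0 < lam)
    (ψ : ℕ → ℝ) (hψ : Nonconstant n ψ)
    (hEL : EulerLagrange n π ν lam ψ) :
    lam = gap ↔
      ((∀ i, 1 ≤ i → i < n → ψ i ≤ ψ (i + 1)) ∨
       (∀ i, 1 ≤ i → i < n → ψ (i + 1) ≤ ψ i)) := by
  constructor
  · rintro rfl
    exact aux_mono n hn π ν hπ hπ1 hν0 hνn lam hgap hlam ψ hψ hEL
  · rintro (h | h)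
    · exact aux_gap n hn π ν hπ hπ1 hν hν0 hνn gap hgap lam hlam ψ hψ hEL h
    · refine aux_gap n hn π ν hπ hπ1 hν hν0 hνn gap hgap lam hlam (fun i => - ψ i) ?_ ?_ ?_
      · obtain ⟨i, hi, j, hj, hij⟩ := hψ
        exact ⟨i, hi, j, hj, fun h => hij (neg_injective h)⟩
      · intro i hi
        have := hEL i hi
        linear_combination -this
      · intro i h1 h2
        exact neg_le_neg (h i h1 h2)
end
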